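/- Let F be a field and let A = {0, 1, a, b} ⊆ F, where 0, 1, a, b are pairwise distinct. Then E(A) = E({0,1,a}) ∪ E({0,1,b}) ∪ E(a−b) ∪ E((a−b)/a) ∪ E((a−b)/b) ∪ E((a−1)/b) ∪ E((b−1)/a) ∪ E((a−1)/(b−1)) ∪ E((a−1)/(a−b)) ∪ E((b−1)/(a−b)) ∪ E(a/b), where E(c) = {c, −c, 1/c, −1/c} for c ∈ F \ {0} and E(S) is the exceptional set of a subset S of F. -/

import Mathlib

/-- The exceptional set `E(S)`: the set of nonzero `c` such that `S` is not a Sidon set for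
the binary linear form `x₁ + cx₂`. -/
def sidonExceptionalSet {F : Type*} [Field F] (S : Set F) : Set F :=
  {c : F | c ≠ 0 ∧ ¬ (∀ a₁ ∈ S, ∀ a₂ ∈ S, ∀ a₁' ∈ S, ∀ a₂' ∈ S,
    a₁ + c * a₂ = a₁' + c * a₂' → a₁ = a₁' ∧ a₂ = a₂')}

/-- `E(c) = {c, −c, 1/c, −1/c}` for a nonzero field element `c`. -/
def quadE {F : Type*} [Field F] (c : F) : Set F := {c, -c, c⁻¹, -c⁻¹}

theorem aux_key {F : Type*} [Field F] (S D : Set F)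
    (h1 : ∀ x ∈ S, ∀ y ∈ S, x ≠ y → x - y ∈ D ∨ -(x - y) ∈ D)
    (h2 : ∀ d ∈ D, ∃ x ∈ S, ∃ y ∈ S, x ≠ y ∧ x - y = d) (c : F) :
    c ∈ sidonExceptionalSet S ↔ c ≠ 0 ∧ ∃ d ∈ D, ∃ e ∈ D, c * e = d ∨ c * e = -d := by
  unfold sidonExceptionalSet
  constructor
  · rintro ⟨hc, h⟩
    refine ⟨hc, ?_⟩
    push Not at h
    obtain ⟨x, hx, y, hy, z, hz, w, hw, heq, hne⟩ := h
    have hyw : y ≠ w := by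
      rintro rfl
      exact hne (by simpa using heq) rfl
    have hxz : x ≠ z := by
      rintro rfl
      apply hyw
      have : c * y = c * w := by simpa using heq
      exact mul_left_cancel₀ hc this
    have key : c * (y - w) = -(x - z) := by linear_combination heq
    rcases h1 x hx z hz hxz with h | h <;> rcases h1 y hy w hw hyw with h' | h'
    · exact ⟨_, h, _, h', Or.inr key⟩
    · exact ⟨_, h, _, h', Or.inl (by linear_combination -key)⟩
    · exact ⟨_, h, _, h', Or.inl key⟩
    · exact ⟨_, h, _, h', Or.inr (by linear_combination -key)⟩
  · rintro ⟨hc, d, hd, e, he, h⟩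
    refine ⟨hc, fun H => ?_⟩
    obtain ⟨x, hx, y, hy, hxy, rfl⟩ := h2 d hd
    obtain ⟨z, hz, w, hw, hzw, rfl⟩ := h2 e he
    rcases h with h | h
    · exact hzw (H y hy z hz x hx w hw (by linear_combination h)).2
    · exact hzw (H x hx z hz y hy w hw (by linear_combination h)).2

theorem aux_quad {F : Type*} [Field F] (u v c : F) (hu : u ≠ 0) (hv : v ≠ 0) :
    c ∈ quadE (u / v) ↔
      c ≠ 0 ∧ (c * v = u ∨ c * v = -u ∨ c * u = v ∨ c * u = -v) := by
  have e1 : c = u / v ↔ c * v = u := eq_div_iff hv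
  have e2 : c = -(u / v) ↔ c * v = -u := by rw [← neg_div]; exact eq_div_iff hv
  have e3 : c = (u / v)⁻¹ ↔ c * u = v := by rw [inv_div]; exact eq_div_iff hu
  have e4 : c = -(u / v)⁻¹ ↔ c * u = -v := by
    rw [inv_div, ← neg_div]; exact eq_div_iff hu
  simp only [quadE, Set.mem_insert_iff, Set.mem_singleton_iff, e1, e2, e3, e4]
  constructor
  · intro h
    refine ⟨?_, h⟩
    rintro rfl
    simp only [zero_mul] at h
    rcases h with h | h | h | h
    · exact hu h.symm
    · exact hu (neg_eq_zero.1 h.symm)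
    · exact hv h.symm
    · exact hv (neg_eq_zero.1 h.symm)
  · exact fun h => h.2

theorem aux_three {F : Type*} [Field F] (a : F) (ha0 : a ≠ 0) (ha1 : a ≠ 1) (c : F) :
    c ∈ sidonExceptionalSet ({0, 1, a} : Set F) ↔ c ≠ 0 ∧
      ∃ d ∈ ({1, a, a - 1} : Set F), ∃ e ∈ ({1, a, a - 1} : Set F),
        c * e = d ∨ c * e = -d := by
  apply aux_key
  · rintro x (rfl | rfl | rfl) y (rfl | rfl | rfl) h <;> simp at h ⊢
  · rintro d (rfl | rfl | rfl)
    · exact ⟨1, by simp, 0, by simp, by simp, by simp⟩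
    · exact ⟨d, by simp, 0, by simp, ha0, by simp⟩
    · exact ⟨a, by simp, 1, by simp, ha1, by simp⟩

theorem aux_four {F : Type*} [Field F] (a b : F) (ha0 : a ≠ 0) (ha1 : a ≠ 1)
    (hb0 : b ≠ 0) (hb1 : b ≠ 1) (hab : a ≠ b) (c : F) :
    c ∈ sidonExceptionalSet ({0, 1, a, b} : Set F) ↔ c ≠ 0 ∧
      ∃ d ∈ ({1, a, b, a - 1, b - 1, a - b} : Set F),
      ∃ e ∈ ({1, a, b, a - 1, b - 1, a - b} : Set F),
        c * e = d ∨ c * e = -d := by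
  apply aux_key
  · rintro x (rfl | rfl | rfl | rfl) y (rfl | rfl | rfl | rfl) h <;> simp at h ⊢
  · rintro d (rfl | rfl | rfl | rfl | rfl | rfl)
    · exact ⟨1, by simp, 0, by simp, by simp, by simp⟩
    · exact ⟨d, by simp, 0, by simp, ha0, by simp⟩
    · exact ⟨d, by simp, 0, by simp, hb0, by simp⟩
    · exact ⟨a, by simp, 1, by simp, ha1, by simp⟩
    · exact ⟨b, by simp, 1, by simp, hb1, by simp⟩
    · exact ⟨a, by simp, b, by simp, hab, by simp⟩

theorem aux_diag {F : Type*} [Field F] (c d : F) (hd : d ≠ 0)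
    (h : c * d = d ∨ c * d = -d) : c * 1 = 1 ∨ c * 1 = -1 := by
  rcases h with h | h
  · left; apply mul_right_cancel₀ hd; linear_combination h
  · right; apply mul_right_cancel₀ hd; linear_combination h

theorem aux_comb {F : Type*} [Field F] (c : F) (p q r s t o : F)
    (dp : c * p = p ∨ c * p = -p → c * o = o ∨ c * o = -o)
    (dq : c * q = q ∨ c * q = -q → c * o = o ∨ c * o = -o)
    (dr : c * r = r ∨ c * r = -r → c * o = o ∨ c * o = -o)
    (ds : c * s = s ∨ c * s = -s → c * o = o ∨ c * o = -o)
    (dt : c * t = t ∨ c * t = -t → c * o = o ∨ c * o = -o) :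
    (∃ d ∈ ({o, p, q, r, s, t} : Set F), ∃ e ∈ ({o, p, q, r, s, t} : Set F),
        c * e = d ∨ c * e = -d) ↔
    ((∃ d ∈ ({o, p, r} : Set F), ∃ e ∈ ({o, p, r} : Set F), c * e = d ∨ c * e = -d) ∨
     (∃ d ∈ ({o, q, s} : Set F), ∃ e ∈ ({o, q, s} : Set F), c * e = d ∨ c * e = -d) ∨
     (c * o = t ∨ c * o = -t ∨ c * t = o ∨ c * t = -o) ∨
     (c * p = t ∨ c * p = -t ∨ c * t = p ∨ c * t = -p) ∨
     (c * q = t ∨ c * q = -t ∨ c * t = q ∨ c * t = -q) ∨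
     (c * q = r ∨ c * q = -r ∨ c * r = q ∨ c * r = -q) ∨
     (c * p = s ∨ c * p = -s ∨ c * s = p ∨ c * s = -p) ∨
     (c * s = r ∨ c * s = -r ∨ c * r = s ∨ c * r = -s) ∨
     (c * t = r ∨ c * t = -r ∨ c * r = t ∨ c * r = -t) ∨
     (c * t = s ∨ c * t = -s ∨ c * s = t ∨ c * s = -t) ∨
     (c * q = p ∨ c * q = -p ∨ c * p = q ∨ c * p = -q)) := by
  simp only [Set.mem_insert_iff, Set.mem_singleton_iff, exists_eq_or_imp, exists_eq_left]
  constructor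
  · rintro ((h|h|h|h|h|h)|(h|h|h|h|h|h)|(h|h|h|h|h|h)|(h|h|h|h|h|h)|(h|h|h|h|h|h)|(h|h|h|h|h|h))
    all_goals first
      | (rcases h with h | h <;> simp only [h, true_or, or_true]; done)
      | (have h' := dt h; rcases h' with h | h <;> simp only [h, true_or, or_true]; done)
  · rintro (h|h|h|h|h|h|h|h|h|h|h)
    all_goals casesm* _ ∨ _
    all_goals simp only [*, true_or, or_true]

/-- For `A = {0, 1, a, b}` with `0, 1, a, b` pairwise distinct,
`E(A) = E({0,1,a}) ∪ E({0,1,b}) ∪ E(a−b) ∪ E((a−b)/a) ∪ E((a−b)/b) ∪ E((a−1)/b)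
∪ E((b−1)/a) ∪ E((a−1)/(b−1)) ∪ E((a−1)/(a−b)) ∪ E((b−1)/(a−b)) ∪ E(a/b)`. -/
theorem exceptional_set_four_element
    (F : Type*) [Field F] (a b : F)
    (ha0 : a ≠ 0) (ha1 : a ≠ 1) (hb0 : b ≠ 0) (hb1 : b ≠ 1) (hab : a ≠ b) :
    sidonExceptionalSet ({0, 1, a, b} : Set F) =
      sidonExceptionalSet ({0, 1, a} : Set F) ∪ sidonExceptionalSet ({0, 1, b} : Set F)
        ∪ quadE (a - b) ∪ quadE ((a - b) / a) ∪ quadE ((a - b) / b)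
        ∪ quadE ((a - 1) / b) ∪ quadE ((b - 1) / a) ∪ quadE ((a - 1) / (b - 1))
        ∪ quadE ((a - 1) / (a - b)) ∪ quadE ((b - 1) / (a - b)) ∪ quadE (a / b) := by
  ext c
  have t : a - b ≠ 0 := sub_ne_zero.2 hab
  have r : a - 1 ≠ 0 := sub_ne_zero.2 ha1
  have s : b - 1 ≠ 0 := sub_ne_zero.2 hb1
  have e0 : quadE (a - b) = quadE ((a - b) / 1) := by rw [div_one]
  rw [e0]
  simp only [Set.mem_union]
  rw [aux_four a b ha0 ha1 hb0 hb1 hab, aux_three a ha0 ha1, aux_three b hb0 hb1,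
    aux_quad _ _ _ t one_ne_zero, aux_quad _ _ _ t ha0, aux_quad _ _ _ t hb0,
    aux_quad _ _ _ r hb0, aux_quad _ _ _ s ha0, aux_quad _ _ _ r s,
    aux_quad _ _ _ r t, aux_quad _ _ _ s t, aux_quad _ _ _ ha0 hb0,
    aux_comb c a b (a - 1) (b - 1) (a - b) 1 (aux_diag c a ha0) (aux_diag c b hb0)
      (aux_diag c _ r) (aux_diag c _ s) (aux_diag c _ t)]
  simp only [← and_or_left, or_assoc]
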